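/- Let K be a field of characteristic zero, let q : ĝ → g be a surjective homomorphism of Lie algebras over K with kernel n, and let V be a g-module, regarded as a ĝ-module via x·v := q(x)·v. Let σ : g → ĝ be a linear section of q, p ∈ ℕ, and let f : n^p → V be a symmetric ĝ-invariant p-linear map. Then the alternating 2p-linear map f_σ is a Chevalley–Eilenberg cocycle: d_g f_σ = 0. -/

import Mathlib

open scoped BigOperators

/-- The Chevalley–Eilenberg differential on `V`-valued cochains of a Lie algebra `g`
acting on a module `V`. -/
def ceDiff {g V : Type*} [LieRing g] [AddCommGroup V] [LieRingModule g V]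
    (p : ℕ) (ω : (Fin p → g) → V) : (Fin (p + 1) → g) → V :=
  fun x =>
    (∑ j : Fin (p + 1), ((-1 : ℤ) ^ (j : ℕ)) • ⁅x j, ω (x ∘ j.succAbove)⁆)
      + ∑ j : Fin (p + 1), ∑ i : Fin (p + 1),
          if (i : ℕ) < (j : ℕ) then
            ((-1 : ℤ) ^ ((i : ℕ) + (j : ℕ))) •
              ω (fun k : Fin p =>
                if (k : ℕ) = 0 then ⁅x i, x j⁆
                else
                  x ⟨if (k : ℕ) - 1 < (i : ℕ) then (k : ℕ) - 1
                     else if (k : ℕ) < (j : ℕ) then (k : ℕ) else (k : ℕ) + 1,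
                     by have := k.isLt; split_ifs <;> omega⟩)
          else 0

/-- The curvature `R_σ(x,y) = ⁅σ x, σ y⁆ - σ ⁅x,y⁆` of a linear section `σ` of a surjective
Lie algebra morphism `π : gh → g`, as an element of the kernel `n = ker π`. -/
def curvKer {K g gh : Type*} [Field K] [LieRing g] [LieAlgebra K g]
    [LieRing gh] [LieAlgebra K gh]
    (π : gh →ₗ⁅K⁆ g) (σ : g →ₗ[K] gh) (hσ : ∀ x, π (σ x) = x) (x y : g) :
    π.ker :=
  ⟨⁅σ x, σ y⁆ - σ ⁅x, y⁆, by
    rw [LieHom.mem_ker]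
    simp [hσ]⟩

/-- The Chern–Weil cochain `f_σ (x₁,…,x_{2p}) = 2^{-p} Σ_{τ ∈ S_{2p}} sgn(τ)
f(R(x_{τ(1)},x_{τ(2)}),…,R(x_{τ(2p-1)},x_{τ(2p)}))` attached to an invariant symmetric
`p`-linear map `f : n^p → V` and a linear section `σ`.  The arity `a` is passed along
with a proof `a = 2*p`. -/
noncomputable def chernWeil {K g gh V : Type*} [Field K] [LieRing g] [LieAlgebra K g]
    [LieRing gh] [LieAlgebra K gh] [AddCommGroup V] [Module K V]
    (π : gh →ₗ⁅K⁆ g) (p a : ℕ) (ha : a = 2 * p)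
    (σ : g →ₗ[K] gh) (hσ : ∀ x, π (σ x) = x)
    (f : MultilinearMap K (fun _ : Fin p => π.ker) V) :
    (Fin a → g) → V :=
  fun x => ((2 : K) ^ p)⁻¹ •
    ∑ τ : Equiv.Perm (Fin a),
      ((Equiv.Perm.sign τ : ℤ)) •
        f (fun s : Fin p =>
          curvKer π σ hσ
            (x (τ ⟨2 * (s : ℕ), by have := s.isLt; omega⟩))
            (x (τ ⟨2 * (s : ℕ) + 1, by have := s.isLt; omega⟩)))

/-!
For an alternating cochain `ω` the two halves of the differential combine to
`2 dω(x₀, …, xₙ) = ∑ᵢ (-1)ⁱ (xᵢ · ω + L_{xᵢ} ω)(x₀, …, x̂ᵢ, …, xₙ)`, with `L` the Lie derivative.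
Let `D_a = [σ a, ·]` on the kernel. By invariance of `f`, when `ω` is the antisymmetrisation of
`f(R(z₀, z₁), R(z₂, z₃), …)` the right-hand side is a sum over `s` of antisymmetrisations of the
same expression with its `s`-th argument `R(b, c)` replaced by `D_a (R(b, c)) + (D_a R)(b, c)`,
where `a` is the additional variable. The cyclic sum of this argument over `a, b, c` vanishes by
the Bianchi identity, so the permutations cancel along the left cosets of the subgroup generated
by a 3-cycle. Grouping them in this way avoids dividing by 3.
-/

section AlternatingSum

variable {ι g V : Type*} [AddCommGroup V]

/-- The unnormalised antisymmetrisation `∑_τ sgn(τ) F(x ∘ τ)` of a function `F` of a finite family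
of variables, which need not be multilinear. -/
def altSum [Fintype ι] [DecidableEq ι] (F : (ι → g) → V) (x : ι → g) : V :=
  ∑ τ : Equiv.Perm ι, (Equiv.Perm.sign τ : ℤ) • F (x ∘ τ)

section Fintype

variable [Fintype ι] [DecidableEq ι]

lemma altSum_add (F G : (ι → g) → V) (x : ι → g) :
    altSum (fun y ↦ F y + G y) x = altSum F x + altSum G x := by
  simp only [altSum, smul_add, Finset.sum_add_distrib]

lemma altSum_sum {κ : Type*} [Fintype κ] (F : κ → (ι → g) → V) (x : ι → g) :
    altSum (fun y ↦ ∑ k, F k y) x = ∑ k, altSum (F k) x := by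
  simp only [altSum, Finset.smul_sum]
  exact Finset.sum_comm

lemma altSum_comp_perm (F : (ι → g) → V) (x : ι → g) (ρ : Equiv.Perm ι) :
    altSum F (x ∘ ρ) = (Equiv.Perm.sign ρ : ℤ) • altSum F x := by
  simp only [altSum, Finset.smul_sum]
  refine Fintype.sum_equiv (Equiv.mulLeft ρ) _ _ fun τ ↦ ?_
  rw [Equiv.coe_mulLeft, Equiv.Perm.sign_mul, Units.val_mul, smul_smul, ← mul_assoc,
    Int.units_coe_mul_self, one_mul, Equiv.Perm.coe_mul, Function.comp_assoc]

lemma altSum_update_neg [Neg g] {F : (ι → g) → V}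
    (hF : ∀ y k a, F (Function.update y k (-a)) = -F (Function.update y k a))
    (x : ι → g) (k : ι) (a : g) :
    altSum F (Function.update x k (-a)) = -altSum F (Function.update x k a) := by
  simp only [altSum, Function.update_comp_equiv, hF, smul_neg, Finset.sum_neg_distrib]

lemma sum_eq_zero_of_sum_leftCoset_eq_zero {G : Type*} [Group G] [Fintype G] (H : Subgroup G)
    [Fintype H] {φ : G → V} (hφ : ∀ a, ∑ h : H, φ (a * h) = 0) : ∑ a, φ a = 0 := by
  classical
  rw [← Fintype.sum_fiberwise (QuotientGroup.mk : G → G ⧸ H)]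
  refine Finset.sum_eq_zero fun L _ ↦ ?_
  induction L using QuotientGroup.induction_on with | H a => ?_
  rw [← hφ a]
  refine Fintype.sum_equiv
    ((Equiv.mulLeft a⁻¹).subtypeEquiv fun b ↦ eq_comm.trans QuotientGroup.eq) _ _ fun b ↦ ?_
  simp

lemma altSum_eq_zero_of_isThreeCycle {F : (ι → g) → V} {c : Equiv.Perm ι} (hc : c.IsThreeCycle)
    (hF : ∀ y, F y + F (y ∘ c) + F (y ∘ c ∘ c) = 0) (x : ι → g) : altSum F x = 0 := by
  refine sum_eq_zero_of_sum_leftCoset_eq_zero (Subgroup.zpowers c) fun τ ↦ ?_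
  rw [← ((finCongr hc.orderOf.symm).trans
    (finEquivZPowers (isOfFinOrder_of_finite c))).sum_comp, Fin.sum_univ_three]
  simpa [finEquivZPowers_apply, hc.sign, pow_two, ← Function.comp_assoc, ← smul_add] using
    congrArg ((Equiv.Perm.sign τ : ℤ) • ·) (hF (x ∘ τ))

end Fintype

variable {n : ℕ}

lemma bijective_cycleRange_symm_mul_decomposeFin_symm (n : ℕ) :
    Function.Bijective fun a : Fin (n + 1) × Equiv.Perm (Fin n) ↦
      a.1.cycleRange.symm * Equiv.Perm.decomposeFin.symm (0, a.2) := by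
  rw [Fintype.bijective_iff_injective_and_card]
  refine ⟨?_, by simp [Fintype.card_perm, Nat.factorial_succ]⟩
  rintro ⟨i, e⟩ ⟨j, e'⟩ h
  obtain rfl : i = j := by simpa using congrArg (· 0) h
  simpa using mul_left_cancel h

lemma altSum_succ (F : g → (Fin n → g) → V) (x : Fin (n + 1) → g) :
    altSum (fun y ↦ F (y 0) (Fin.tail y)) x =
      ∑ i : Fin (n + 1), (-1 : ℤ) ^ (i : ℕ) • altSum (F (x i)) (i.removeNth x) := by
  rw [altSum, ← (bijective_cycleRange_symm_mul_decomposeFin_symm n).sum_comp,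
    Fintype.sum_prod_type]
  refine Finset.sum_congr rfl fun i _ ↦ ?_
  rw [altSum, Finset.smul_sum]
  refine Finset.sum_congr rfl fun e _ ↦ ?_
  have tail_eq : Fin.tail (x ∘ (i.cycleRange.symm * Equiv.Perm.decomposeFin.symm (0, e))) =
      i.removeNth x ∘ e := by
    funext k
    simp [Fin.tail, Fin.removeNth_apply]
  rw [tail_eq]
  simp [mul_smul, Fin.sign_cycleRange]

end AlternatingSum

section RemovePair

variable {g : Type*} {n : ℕ}

lemma sum_sum_succAbove {M : Type*} [AddCommMonoid M] (φ : Fin (n + 1) → Fin (n + 1) → M) :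
    ∑ i, ∑ k, φ i (i.succAbove k) =
      ∑ j : Fin (n + 1), ∑ i : Fin (n + 1), if (i : ℕ) < (j : ℕ) then φ i j + φ j i else 0 := by
  have off_diagonal (i : Fin (n + 1)) :
      ∑ k, φ i (i.succAbove k) =
        ∑ j, ((if i < j then φ i j else 0) + if j < i then φ i j else 0) := by
    rw [Fin.sum_univ_succAbove _ i]
    simp only [lt_irrefl, if_false, add_zero, zero_add]
    refine Finset.sum_congr rfl fun k _ ↦ ?_
    rcases lt_or_gt_of_ne (Fin.succAbove_ne i k) with h | h <;> simp [h, h.not_gt]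
  simp only [off_diagonal, Finset.sum_add_distrib]
  rw [Finset.sum_comm]
  simp only [← Finset.sum_add_distrib, ite_add_ite, add_zero, Fin.lt_def]

/-- The family `(b, x₀, …, x̂ᵢ, …, x̂ⱼ, …)` for `i < j`, with the indices written as in `ceDiff`. -/
def consRemovePair (b : g) (x : Fin (n + 1) → g) (i j : Fin (n + 1)) : Fin n → g := fun k ↦
  if (k : ℕ) = 0 then b
  else
    x ⟨if (k : ℕ) - 1 < (i : ℕ) then (k : ℕ) - 1
       else if (k : ℕ) < (j : ℕ) then (k : ℕ) else (k : ℕ) + 1,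
       by have := k.isLt; split_ifs <;> omega⟩

lemma consRemovePair_comp_cycleRange (b : g) (x : Fin (n + 1) → g) (i : Fin (n + 1)) (k : Fin n) :
    consRemovePair b x (min i (i.succAbove k)) (max i (i.succAbove k)) ∘ k.cycleRange =
      Function.update (i.removeNth x) k b := by
  funext l
  rcases lt_trichotomy l k with h | rfl | h
  · rw [Function.update_of_ne h.ne, Fin.removeNth_apply]
    simp only [consRemovePair, Function.comp_apply, Fin.coe_cycleRange_of_lt h, Nat.succ_ne_zero,
      if_false]
    congr 1
    ext
    simp only [Fin.succAbove, Fin.lt_def, Fin.val_castSucc, Fin.coe_min, Fin.coe_max] at h ⊢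
    grind
  · simp [consRemovePair, Fin.coe_cycleRange_of_le le_rfl]
  · rw [Function.update_of_ne h.ne', Fin.removeNth_apply]
    have hl : (l : ℕ) ≠ 0 := by have := Fin.lt_def.mp h; omega
    simp only [consRemovePair, Function.comp_apply, Fin.cycleRange_of_gt h, hl, if_false]
    congr 1
    ext
    simp only [Fin.succAbove, Fin.lt_def, Fin.val_castSucc, Fin.coe_min, Fin.coe_max] at h ⊢
    grind

end RemovePair

section Differential

variable {g V : Type*} [LieRing g] [AddCommGroup V] {n : ℕ}

/-- The summand `(-1)^(i+j) ω([xᵢ, xⱼ], x₀, …, x̂ᵢ, …, x̂ⱼ, …)` of the Chevalley–Eilenberg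
differential, meaningful for `i < j`. -/
def ceBracketTerm (ω : (Fin n → g) → V) (x : Fin (n + 1) → g) (i j : Fin (n + 1)) : V :=
  (-1 : ℤ) ^ ((i : ℕ) + (j : ℕ)) • ω (consRemovePair ⁅x i, x j⁆ x i j)

variable {ω : (Fin n → g) → V}
  (hω_perm : ∀ y (ρ : Equiv.Perm (Fin n)), ω (y ∘ ρ) = (Equiv.Perm.sign ρ : ℤ) • ω y)
  (hω_neg : ∀ y k a, ω (Function.update y k (-a)) = -ω (Function.update y k a))

include hω_perm hω_neg in
lemma neg_one_pow_smul_update_removeNth_lie (x : Fin (n + 1) → g) (i : Fin (n + 1)) (k : Fin n) :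
    (-1 : ℤ) ^ (i : ℕ) • ω (Function.update (i.removeNth x) k ⁅x i, i.removeNth x k⁆) =
      -ceBracketTerm ω x (min i (i.succAbove k)) (max i (i.succAbove k)) := by
  have update_eq (b : g) : ω (Function.update (i.removeNth x) k b) = (-1 : ℤ) ^ (k : ℕ) •
      ω (consRemovePair b x (min i (i.succAbove k)) (max i (i.succAbove k))) := by
    rw [← consRemovePair_comp_cycleRange, hω_perm, Fin.sign_cycleRange]
    simp
  rcases lt_or_gt_of_ne (Fin.succAbove_ne i k) with h | h
  · have hk : (i.succAbove k : ℕ) = k := by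
      rw [Fin.succAbove_of_castSucc_lt _ _ (Fin.succAbove_lt_iff_castSucc_lt _ _ |>.mp h),
        Fin.val_castSucc]
    rw [Fin.removeNth_apply, ← lie_skew, hω_neg, update_eq, min_eq_right h.le, max_eq_left h.le,
      ceBracketTerm, hk, smul_neg, smul_smul, pow_add, mul_comm]
  · have hk : (i.succAbove k : ℕ) = k + 1 := by
      rw [Fin.succAbove_of_le_castSucc _ _ (Fin.lt_succAbove_iff_le_castSucc _ _ |>.mp h),
        Fin.val_succ]
    rw [Fin.removeNth_apply, update_eq, min_eq_left h.le, max_eq_right h.le, ceBracketTerm, hk,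
      smul_smul, ← add_assoc, pow_succ, ← pow_add, mul_neg_one, neg_smul, neg_neg]

variable [LieRingModule g V]

lemma ceDiff_const_smul {K : Type*} [CommRing K] [LieAlgebra K g] [Module K V] [LieModule K g V]
    (c : K) (ω : (Fin n → g) → V) : ceDiff n (c • ω) = c • ceDiff n ω := by
  funext x
  simp only [ceDiff, Pi.smul_apply, lie_smul, smul_add, Finset.smul_sum, smul_ite, smul_zero,
    smul_comm c]

/-- The Lie derivative `(L_a ω)(z) = a · ω(z) - ∑ₖ ω(z₀, …, [a, zₖ], …)` of a cochain. -/
def lieDeriv (a : g) (ω : (Fin n → g) → V) (z : Fin n → g) : V :=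
  ⁅a, ω z⁆ - ∑ k, ω (Function.update z k ⁅a, z k⁆)

lemma lie_altSum (a : g) (F : (Fin n → g) → V) (z : Fin n → g) :
    ⁅a, altSum F z⁆ = altSum (fun y ↦ ⁅a, F y⁆) z := by
  simp only [altSum, lie_sum, lie_zsmul]

lemma lieDeriv_altSum (a : g) (F : (Fin n → g) → V) (z : Fin n → g) :
    lieDeriv a (altSum F) z = altSum (lieDeriv a F) z := by
  have update_sum (τ : Equiv.Perm (Fin n)) :
      ∑ k, F (Function.update z k ⁅a, z k⁆ ∘ τ) =
        ∑ k, F (Function.update (z ∘ τ) k ⁅a, (z ∘ τ) k⁆) := by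
    refine Fintype.sum_equiv τ.symm _ _ fun k ↦ ?_
    rw [Function.update_comp_equiv, Function.comp_apply, τ.apply_symm_apply]
  rw [lieDeriv, lie_altSum]
  simp only [altSum, lieDeriv, smul_sub, Finset.sum_sub_distrib, ← update_sum, Finset.smul_sum]
  rw [Finset.sum_comm]

lemma ceDiff_eq (ω : (Fin n → g) → V) (x : Fin (n + 1) → g) :
    ceDiff n ω x = (∑ i : Fin (n + 1), (-1 : ℤ) ^ (i : ℕ) • ⁅x i, ω (i.removeNth x)⁆) +
      ∑ j : Fin (n + 1), ∑ i : Fin (n + 1),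
        if (i : ℕ) < (j : ℕ) then ceBracketTerm ω x i j else 0 :=
  rfl

include hω_perm hω_neg in
lemma two_smul_ceDiff (x : Fin (n + 1) → g) :
    (2 : ℤ) • ceDiff n ω x = ∑ i : Fin (n + 1), (-1 : ℤ) ^ (i : ℕ) •
      (⁅x i, ω (i.removeNth x)⁆ + lieDeriv (x i) ω (i.removeNth x)) := by
  have bracket_sum : ∑ i : Fin (n + 1), (-1 : ℤ) ^ (i : ℕ) •
      ∑ k, ω (Function.update (i.removeNth x) k ⁅x i, i.removeNth x k⁆) =
        -((2 : ℤ) • ∑ j : Fin (n + 1), ∑ i : Fin (n + 1),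
          if (i : ℕ) < (j : ℕ) then ceBracketTerm ω x i j else 0) := by
    simp only [Finset.smul_sum, neg_one_pow_smul_update_removeNth_lie hω_perm hω_neg,
      Finset.sum_neg_distrib]
    rw [sum_sum_succAbove fun a b ↦ ceBracketTerm ω x (min a b) (max a b)]
    refine congrArg _ (Finset.sum_congr rfl fun j _ ↦ Finset.sum_congr rfl fun i _ ↦ ?_)
    split_ifs with h
    · have h : i < j := h
      rw [min_eq_left h.le, max_eq_right h.le, min_eq_right h.le, max_eq_left h.le, two_smul]
    · rw [smul_zero]
  simp only [ceDiff_eq, lieDeriv, smul_add, smul_sub, Finset.sum_add_distrib,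
    Finset.sum_sub_distrib, bracket_sum, two_smul]
  abel

end Differential

section Pairs

variable {g N : Type*} {p : ℕ}

/-- The position `2s` of the first entry of the `s`-th pair. -/
def evenIdx (s : Fin p) : Fin (2 * p) := ⟨2 * s, by omega⟩

/-- The position `2s + 1` of the second entry of the `s`-th pair. -/
def oddIdx (s : Fin p) : Fin (2 * p) := ⟨2 * s + 1, by omega⟩

lemma evenIdx_ne_oddIdx (s t : Fin p) : evenIdx s ≠ oddIdx t := by
  simp only [evenIdx, oddIdx, ne_eq, Fin.mk.injEq]
  omega

lemma evenIdx_injective : Function.Injective (evenIdx (p := p)) := fun s t h ↦ by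
  simpa [evenIdx, Fin.ext_iff] using h

lemma oddIdx_injective : Function.Injective (oddIdx (p := p)) := fun s t h ↦ by
  simpa [oddIdx, Fin.ext_iff] using h

lemma exists_eq_evenIdx_or_eq_oddIdx (k : Fin (2 * p)) :
    ∃ s : Fin p, k = evenIdx s ∨ k = oddIdx s := by
  refine ⟨⟨k / 2, by omega⟩, ?_⟩
  simp only [evenIdx, oddIdx, Fin.ext_iff]
  omega

lemma sum_fin_two_mul {M : Type*} [AddCommMonoid M] (φ : Fin (2 * p) → M) :
    ∑ k, φ k = ∑ s, (φ (evenIdx s) + φ (oddIdx s)) := by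
  rw [← (finProdFinEquiv.trans (finCongr (mul_comm p 2))).sum_comp, Fintype.sum_prod_type]
  refine Finset.sum_congr rfl fun s _ ↦ ?_
  rw [Fin.sum_univ_two]
  congr 2 <;> ext <;> simp [evenIdx, oddIdx, add_comm]

/-- The family `s ↦ R(z₂ₛ, z₂ₛ₊₁)` of values of `R` on consecutive entries. -/
def mapPairs (R : g → g → N) (z : Fin (2 * p) → g) : Fin p → N :=
  fun s ↦ R (z (evenIdx s)) (z (oddIdx s))

variable (R : g → g → N) (z : Fin (2 * p) → g) (s : Fin p) (a : g)

lemma mapPairs_update_evenIdx :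
    mapPairs R (Function.update z (evenIdx s) a) =
      Function.update (mapPairs R z) s (R a (z (oddIdx s))) := by
  funext t
  obtain rfl | h := eq_or_ne t s
  · simp [mapPairs, (evenIdx_ne_oddIdx _ _).symm]
  · simp [mapPairs, h, evenIdx_injective.ne h, (evenIdx_ne_oddIdx _ _).symm]

lemma mapPairs_update_oddIdx :
    mapPairs R (Function.update z (oddIdx s) a) =
      Function.update (mapPairs R z) s (R (z (evenIdx s)) a) := by
  funext t
  obtain rfl | h := eq_or_ne t s
  · simp [mapPairs, evenIdx_ne_oddIdx]
  · simp [mapPairs, h, oddIdx_injective.ne h, evenIdx_ne_oddIdx]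

end Pairs

section ChernWeil

variable {K g N V : Type*} [CommRing K] [AddCommGroup N] [Module K N] [AddCommGroup V] [Module K V]
  {p : ℕ} (f : MultilinearMap K (fun _ : Fin p ↦ N) V)

lemma altSum_update_mapPairs_eq_zero (R : g → g → N) {E : g → g → g → N}
    (hE : ∀ a b c, E a b c + E b c a + E c a b = 0) (s : Fin p) (x : Fin (2 * p + 1) → g) :
    altSum (fun y ↦ f (Function.update (mapPairs R (Fin.tail y)) s
      (E (y 0) (Fin.tail y (evenIdx s)) (Fin.tail y (oddIdx s))))) x = 0 := by
  set i := (evenIdx s).succ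
  set j := (oddIdx s).succ
  have hi : 0 ≠ i := (Fin.succ_ne_zero _).symm
  have hj : 0 ≠ j := (Fin.succ_ne_zero _).symm
  have hij : i ≠ j := (Fin.succ_injective _).ne (evenIdx_ne_oddIdx s s)
  set c := Equiv.swap 0 j * Equiv.swap 0 i with hc
  have c_zero : c 0 = i := by simp [hc, Equiv.swap_apply_of_ne_of_ne hi.symm hij]
  have c_i : c i = j := by simp [hc]
  have c_j : c j = 0 := by simp [hc, Equiv.swap_apply_of_ne_of_ne hj.symm hij.symm]
  have c_fix {k : Fin (2 * p)} (hk : k ≠ evenIdx s) (hk' : k ≠ oddIdx s) : c k.succ = k.succ := by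
    simp [hc, i, j, Equiv.swap_apply_of_ne_of_ne, hk, hk', Fin.succ_ne_zero]
  have update_comp_c (y : Fin (2 * p + 1) → g) (b : N) :
      Function.update (mapPairs R (Fin.tail (y ∘ c))) s b =
        Function.update (mapPairs R (Fin.tail y)) s b := by
    funext t
    obtain rfl | ht := eq_or_ne t s
    · simp only [Function.update_self]
    · simp only [Function.update_of_ne ht, mapPairs, Fin.tail, Function.comp_apply,
        c_fix (evenIdx_injective.ne ht) (evenIdx_ne_oddIdx t s),
        c_fix (evenIdx_ne_oddIdx s t).symm (oddIdx_injective.ne ht)]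
  have c_isThreeCycle : c.IsThreeCycle :=
    Equiv.Perm.isThreeCycle_swap_mul_swap_same hj hi hij.symm
  refine altSum_eq_zero_of_isThreeCycle c_isThreeCycle (fun y ↦ ?_) x
  rw [← Function.comp_assoc]
  simp only [update_comp_c, ← MultilinearMap.map_update_add]
  have cyclic_sum := hE (y 0) (y i) (y j)
  have tail_even (y : Fin (2 * p + 1) → g) : Fin.tail y (evenIdx s) = y i := rfl
  have tail_odd (y : Fin (2 * p + 1) → g) : Fin.tail y (oddIdx s) = y j := rfl
  simp only [tail_even, tail_odd, Function.comp_apply, c_zero, c_i, c_j, cyclic_sum,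
    MultilinearMap.map_update_zero]

lemma map_mapPairs_update_neg [Neg g] {R : g → g → N} (hR_neg : ∀ a b, R (-a) b = -R a b)
    (hR_swap : ∀ a b, R a b = -R b a) (z : Fin (2 * p) → g) (k : Fin (2 * p)) (a : g) :
    (f ∘ mapPairs R) (Function.update z k (-a)) = -(f ∘ mapPairs R) (Function.update z k a) := by
  have hR_neg_right (a b : g) : R a (-b) = -R a b := by rw [hR_swap, hR_neg, ← hR_swap]
  obtain ⟨s, rfl | rfl⟩ := exists_eq_evenIdx_or_eq_oddIdx k
  · simp only [Function.comp_apply, mapPairs_update_evenIdx, hR_neg, MultilinearMap.map_update_neg]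
  · simp only [Function.comp_apply, mapPairs_update_oddIdx, hR_neg_right,
      MultilinearMap.map_update_neg]

variable [LieRing g] [LieRingModule g V]

/-- The covariant derivative `(D_a R)(b, c) = D_a (R(b, c)) - R([a, b], c) - R(b, [a, c])`. -/
def covDeriv (D : g → N → N) (R : g → g → N) (a b c : g) : N :=
  D a (R b c) - R ⁅a, b⁆ c - R b ⁅a, c⁆

variable {f} {D : g → N → N} {R : g → g → N}
  (hf : ∀ a y, ⁅a, f y⁆ = ∑ s, f (Function.update y s (D a (y s))))

include hf in
lemma lieDeriv_comp_mapPairs (a : g) (z : Fin (2 * p) → g) :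
    lieDeriv a (f ∘ mapPairs R) z = ∑ s, f (Function.update (mapPairs R z) s
      (covDeriv D R a (z (evenIdx s)) (z (oddIdx s)))) := by
  rw [lieDeriv, Function.comp_apply, hf, sum_fin_two_mul, ← Finset.sum_sub_distrib]
  simp only [Function.comp_apply, mapPairs_update_evenIdx, mapPairs_update_oddIdx, covDeriv,
    MultilinearMap.map_update_sub, sub_add_eq_sub_sub]
  rfl

variable (hR_neg : ∀ a b, R (-a) b = -R a b) (hR_swap : ∀ a b, R a b = -R b a)
  (hR_bianchi : ∀ a b c, D a (R b c) + D b (R c a) + D c (R a b) =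
    R ⁅a, b⁆ c + R ⁅b, c⁆ a + R ⁅c, a⁆ b)

include hR_neg hR_swap hR_bianchi in
lemma cyclic_sum_add_covDeriv_eq_zero (a b c : g) :
    (D a (R b c) + covDeriv D R a b c) + (D b (R c a) + covDeriv D R b c a) +
      (D c (R a b) + covDeriv D R c a b) = 0 := by
  have lie_right (a b c : g) : R b ⁅a, c⁆ = R ⁅c, a⁆ b := by
    rw [hR_swap, ← lie_skew, hR_neg, neg_neg]
  have := hR_bianchi a b c
  simp only [covDeriv, lie_right]
  linear_combination (norm := module) (2 : ℤ) • this

include hf hR_neg hR_swap hR_bianchi in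
theorem two_smul_ceDiff_altSum_comp_mapPairs_eq_zero :
    (2 : ℤ) • ceDiff (2 * p) (altSum (f ∘ mapPairs R)) = 0 := by
  funext x
  let E (a b c : g) : N := D a (R b c) + covDeriv D R a b c
  have integrand (a : g) (z : Fin (2 * p) → g) :
      ⁅a, (f ∘ mapPairs R) z⁆ + lieDeriv a (f ∘ mapPairs R) z = ∑ s,
        f (Function.update (mapPairs R z) s (E a (z (evenIdx s)) (z (oddIdx s)))) := by
    simp only [lieDeriv_comp_mapPairs hf, Function.comp_apply, hf, ← Finset.sum_add_distrib,
      ← MultilinearMap.map_update_add]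
    rfl
  calc
    (2 : ℤ) • ceDiff (2 * p) (altSum (f ∘ mapPairs R)) x
    _ = ∑ i : Fin (2 * p + 1), (-1 : ℤ) ^ (i : ℕ) • altSum (fun z ↦ ∑ s,
          f (Function.update (mapPairs R z) s (E (x i) (z (evenIdx s)) (z (oddIdx s)))))
          (i.removeNth x) := by
      rw [two_smul_ceDiff (altSum_comp_perm _)
        (altSum_update_neg (map_mapPairs_update_neg f hR_neg hR_swap))]
      simp only [lie_altSum, lieDeriv_altSum, ← altSum_add, integrand]
    _ = ∑ s, altSum (fun y ↦ f (Function.update (mapPairs R (Fin.tail y)) s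
          (E (y 0) (Fin.tail y (evenIdx s)) (Fin.tail y (oddIdx s))))) x := by
      rw [← altSum_succ fun a z ↦ ∑ s,
        f (Function.update (mapPairs R z) s (E a (z (evenIdx s)) (z (oddIdx s)))), altSum_sum]
    _ = 0 := Finset.sum_eq_zero fun s _ ↦ altSum_update_mapPairs_eq_zero f R
      (cyclic_sum_add_covDeriv_eq_zero hR_neg hR_swap hR_bianchi) s x

end ChernWeil

section Curvature

variable {K g gh : Type*} [Field K] [LieRing g] [LieAlgebra K g] [LieRing gh] [LieAlgebra K gh]
  (π : gh →ₗ⁅K⁆ g) (σ : g →ₗ[K] gh) (hσ : ∀ x, π (σ x) = x)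

lemma curvKer_neg_left (a b : g) : curvKer π σ hσ (-a) b = -curvKer π σ hσ a b := by
  ext
  simp only [curvKer, LieSubmodule.coe_neg, map_neg, neg_lie]
  abel

lemma curvKer_swap (a b : g) : curvKer π σ hσ a b = -curvKer π σ hσ b a := by
  ext
  simp only [curvKer, LieSubmodule.coe_neg]
  rw [← lie_skew (σ a), ← lie_skew a, map_neg]
  abel

lemma curvKer_bianchi (a b c : g) :
    ⁅σ a, curvKer π σ hσ b c⁆ + ⁅σ b, curvKer π σ hσ c a⁆ + ⁅σ c, curvKer π σ hσ a b⁆ =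
      curvKer π σ hσ ⁅a, b⁆ c + curvKer π σ hσ ⁅b, c⁆ a + curvKer π σ hσ ⁅c, a⁆ b := by
  ext
  have jacobi_σ := lie_jacobi (σ a) (σ b) (σ c)
  have σ_jacobi := congrArg σ (lie_jacobi a b c)
  simp only [map_add, map_zero] at σ_jacobi
  simp only [curvKer, LieSubmodule.coe_add, LieSubmodule.coe_bracket, lie_sub]
  rw [← lie_skew (σ ⁅a, b⁆), ← lie_skew (σ ⁅b, c⁆), ← lie_skew (σ ⁅c, a⁆), ← lie_skew ⁅a, b⁆,
    ← lie_skew ⁅b, c⁆, ← lie_skew ⁅c, a⁆]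
  simp only [map_neg]
  linear_combination (norm := module) jacobi_σ - σ_jacobi

end Curvature

theorem chernWeil_is_cocycle_general {K g gh V : Type*} [Field K] (h2 : (2 : K) ≠ 0)
    [LieRing g] [LieAlgebra K g] [LieRing gh] [LieAlgebra K gh]
    [AddCommGroup V] [Module K V] [LieRingModule g V] [LieModule K g V]
    (π : gh →ₗ⁅K⁆ g) (σ : g →ₗ[K] gh) (hσ : ∀ x, π (σ x) = x)
    (p : ℕ) (f : MultilinearMap K (fun _ : Fin p => π.ker) V)
    (hinv : ∀ (x : gh) (y : Fin p → π.ker),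
      ⁅π x, f y⁆ = ∑ i : Fin p, f (Function.update y i ⁅x, y i⁆)) :
    ceDiff (2 * p) (chernWeil π p (2 * p) rfl σ hσ f) = 0 := by
  have hf (a : g) (y : Fin p → π.ker) :
      ⁅a, f y⁆ = ∑ s, f (Function.update y s ⁅σ a, y s⁆) := by
    rw [← hinv, hσ]
  have two_smul_eq_zero : (2 : ℤ) • ceDiff (2 * p) (altSum (f ∘ mapPairs (curvKer π σ hσ))) = 0 :=
    two_smul_ceDiff_altSum_comp_mapPairs_eq_zero hf (curvKer_neg_left π σ hσ)
      (curvKer_swap π σ hσ) (curvKer_bianchi π σ hσ)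
  have chernWeil_eq : chernWeil π p (2 * p) rfl σ hσ f =
      ((2 : K) ^ p)⁻¹ • altSum (f ∘ mapPairs (curvKer π σ hσ)) := rfl
  rw [chernWeil_eq, ceDiff_const_smul]
  have : (2 : K) • ceDiff (2 * p) (altSum (f ∘ mapPairs (curvKer π σ hσ))) = 0 := by
    rw [← two_smul_eq_zero, two_smul, two_smul]
  rw [(smul_eq_zero.mp this).resolve_left h2, smul_zero]

/-- **The Chern–Weil cochain is a cocycle** (part of Lecomte's theorem): for a surjective
morphism `π : gh → g` of Lie algebras over a field of characteristic zero, a linear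
section `σ` of `π` and a symmetric `gh`-invariant `p`-linear map `f : (ker π)^p → V`,
the `2p`-cochain `f_σ` satisfies `d_g f_σ = 0`. -/
theorem chernWeil_is_cocycle {K g gh V : Type*} [Field K] [CharZero K]
    [LieRing g] [LieAlgebra K g] [LieRing gh] [LieAlgebra K gh]
    [AddCommGroup V] [Module K V] [LieRingModule g V] [LieModule K g V]
    (π : gh →ₗ⁅K⁆ g) (hπ : Function.Surjective π)
    (σ : g →ₗ[K] gh) (hσ : ∀ x, π (σ x) = x)
    (p : ℕ) (f : MultilinearMap K (fun _ : Fin p => π.ker) V)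
    (hsym : ∀ (y : Fin p → π.ker) (τ : Equiv.Perm (Fin p)), f (fun i => y (τ i)) = f y)
    (hinv : ∀ (x : gh) (y : Fin p → π.ker),
      ⁅π x, f y⁆ = ∑ i : Fin p, f (Function.update y i ⁅x, y i⁆)) :
    ceDiff (2 * p) (chernWeil π p (2 * p) rfl σ hσ f) = 0 :=
  chernWeil_is_cocycle_general two_ne_zero π σ hσ p f hinv
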